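/- arXiv:1410.5893 — 2 statements merged into one kernel-verified Lean document; each statement's English description precedes it below -/
import Mathlib

section
/- Let T be a commutative unital ring and let λ : T → ℝ be a multiplicative seminorm on T (i.e. λ(0) = 0, λ(1) = 1, λ(x+y) ≤ λ(x)+λ(y), and λ(xy) = λ(x)λ(y) for all x, y ∈ T). Then there exist a complete normed field K (a field complete with respect to a multiplicative norm) and a unital ring homomorphism φ : T → K such that ‖φ(r)‖_K = λ(r) for all r ∈ T and the closure in K of the subfield generated by φ(T) is all of K. Moreover, such a pair (K, φ) is unique up to isometric isomorphism: if (K', φ') is another such pair, then there is a ring isomorphism θ : K → K' with ‖θ(x)‖ = ‖x‖ for all x and θ ∘ φ = φ'. -/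
/-- A complete normed field together with a unital ring homomorphism from `T`. -/
structure CompleteNormedFieldOver (T : Type) [CommRing T] where
  carrier : Type
  [normedField : NormedField carrier]
  [completeSpace : CompleteSpace carrier]
  hom : T →+* carrier

attribute [instance] CompleteNormedFieldOver.normedField
  CompleteNormedFieldOver.completeSpace

/-- `pt` realizes the multiplicative seminorm `lam` on `T`: the norm of the image of `r`
is `lam r`, and the closure of the subfield generated by the image of `T` is everything. -/
def CompleteNormedFieldOver.Realizes {T : Type} [CommRing T]
    (pt : CompleteNormedFieldOver T) (lam : T → ℝ) : Prop :=
  (∀ r : T, ‖pt.hom r‖ = lam r) ∧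
    closure ((Subfield.closure (Set.range pt.hom) : Subfield pt.carrier) : Set pt.carrier)
      = Set.univ

/-- Isometric isomorphism compatible with the structure maps. -/
def CompleteNormedFieldOver.IsoOver {T : Type} [CommRing T]
    (pt pt' : CompleteNormedFieldOver T) : Prop :=
  ∃ θ : pt.carrier ≃+* pt'.carrier,
    (∀ x : pt.carrier, ‖θ x‖ = ‖x‖) ∧ ∀ r : T, θ (pt.hom r) = pt'.hom r

/-- The fraction field of `T / ker lam`, normed by the extension of `lam`, with its universal
property. -/
theorem exists_normed_fraction_field
    {T : Type} [CommRing T] (lam : T → ℝ)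
    (hnonneg : ∀ x : T, 0 ≤ lam x)
    (h0 : lam 0 = 0) (h1 : lam 1 = 1)
    (hadd : ∀ x y : T, lam (x + y) ≤ lam x + lam y)
    (hmul : ∀ x y : T, lam (x * y) = lam x * lam y) :
    ∃ (F : Type) (_ : NormedField F) (g : T →+* F), (∀ r, ‖g r‖ = lam r) ∧
      (∀ x : F, ∃ a b : T, g b ≠ 0 ∧ x = g a / g b) ∧
      ∀ (K : Type) [NormedField K] (k : T →+* K), (∀ r, ‖k r‖ = lam r) →
        ∃ h : F →+* K, ∀ r, h (g r) = k r := by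
  have hneg1 : lam (-1) = 1 := by
    have h : lam (-1) * lam (-1) = 1 := by rw [← hmul]; simpa using h1
    nlinarith [hnonneg (-1)]
  have hneg : ∀ x, lam (-x) = lam x := fun x => by
    rw [← neg_one_mul, hmul, hneg1, one_mul]
  let P : Ideal T :=
    { carrier := {x | lam x = 0}
      zero_mem' := h0
      add_mem' := by
        intro a b ha hb
        simp only [Set.mem_ofPred_eq] at *
        have := hadd a b
        have := hnonneg (a + b)
        linarith
      smul_mem' := by
        intro c x hx
        simp only [Set.mem_ofPred_eq, smul_eq_mul] at *
        rw [hmul, hx, mul_zero] }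
  have hP : ∀ x, x ∈ P ↔ lam x = 0 := fun x => Iff.rfl
  have hprime : P.IsPrime := by
    refine ⟨?_, ?_⟩
    · rw [Ne, Ideal.eq_top_iff_one, hP, h1]; exact one_ne_zero
    · intro x y hxy
      rw [hP, hmul] at hxy
      exact mul_eq_zero.mp hxy
  let R := T ⧸ P
  let F := FractionRing R
  have hdiff : ∀ a b : T, a - b ∈ P → lam a ≤ lam b := fun a b hab => by
    have := hadd (a - b) b
    rw [sub_add_cancel, (hP _).1 hab, zero_add] at this
    exact this
  let mu : R →* ℝ :=
    { toFun := Quotient.lift lam (by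
        intro a b hab
        have hab' : a - b ∈ P := (Submodule.quotientRel_def P).1 hab
        refine le_antisymm (hdiff a b hab') (hdiff b a ?_)
        rw [← neg_sub]; exact P.neg_mem hab')
      map_one' := h1
      map_mul' := by
        rintro ⟨a⟩ ⟨b⟩
        exact hmul a b }
  have hmu : ∀ a, mu (Ideal.Quotient.mk P a) = lam a := fun a => rfl
  have hunit : ∀ y : nonZeroDivisors R, IsUnit (mu y) := by
    rintro ⟨y, hy⟩
    obtain ⟨a, rfl⟩ := Ideal.Quotient.mk_surjective y
    rw [isUnit_iff_ne_zero]
    intro h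
    exact nonZeroDivisors.ne_zero hy (Ideal.Quotient.eq_zero_iff_mem.2 h)
  let g : T →+* F := (algebraMap R F).comp (Ideal.Quotient.mk P)
  have hg0 : ∀ a, g a = 0 ↔ lam a = 0 := fun a => by
    change algebraMap R F (Ideal.Quotient.mk P a) = 0 ↔ _
    rw [FaithfulSMul.algebraMap_eq_zero_iff, Ideal.Quotient.eq_zero_iff_mem, hP]
  have hsurj : ∀ x : F, ∃ a b : T, g b ≠ 0 ∧ x = g a / g b := fun x => by
    obtain ⟨a, b, hb, rfl⟩ := IsFractionRing.div_surjective (A := R) x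
    obtain ⟨a, rfl⟩ := Ideal.Quotient.mk_surjective a
    obtain ⟨b, rfl⟩ := Ideal.Quotient.mk_surjective b
    refine ⟨a, b, ?_, rfl⟩
    rw [Ne, hg0]
    exact fun h => nonZeroDivisors.ne_zero hb (Ideal.Quotient.eq_zero_iff_mem.2 h)
  let nu : F →* ℝ := (IsLocalization.toLocalizationMap (nonZeroDivisors R) F).lift hunit
  have hnu : ∀ a, nu (g a) = lam a := fun a =>
    (IsLocalization.toLocalizationMap (nonZeroDivisors R) F).lift_eq hunit _
  have hnudiv : ∀ a b, g b ≠ 0 → nu (g a / g b) = lam a / lam b := fun a b hb => by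
    have hb' : lam b ≠ 0 := fun h => hb ((hg0 b).2 h)
    rw [eq_div_iff hb', ← hnu b, ← map_mul, div_mul_cancel₀ _ hb, hnu]
  let v : AbsoluteValue F ℝ :=
    { toFun := nu
      map_mul' := map_mul nu
      nonneg' := fun x => by
        obtain ⟨a, b, hb, rfl⟩ := hsurj x
        change 0 ≤ nu _
        rw [hnudiv _ _ hb]
        exact div_nonneg (hnonneg _) (hnonneg _)
      eq_zero' := fun x => by
        obtain ⟨a, b, hb, rfl⟩ := hsurj x
        have hb' : lam b ≠ 0 := fun h => hb ((hg0 b).2 h)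
        change nu _ = 0 ↔ _
        rw [hnudiv _ _ hb, div_eq_zero_iff, div_eq_zero_iff, hg0, hg0]
      add_le' := fun x y => by
        obtain ⟨a, b, hb, rfl⟩ := hsurj x
        obtain ⟨c, d, hd, rfl⟩ := hsurj y
        have hb' : 0 < lam b := lt_of_le_of_ne (hnonneg b) fun h => hb ((hg0 b).2 h.symm)
        have hd' : 0 < lam d := lt_of_le_of_ne (hnonneg d) fun h => hd ((hg0 d).2 h.symm)
        change nu _ ≤ nu _ + nu _
        rw [hnudiv _ _ hb, hnudiv _ _ hd, div_add_div _ _ hb hd,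
          div_add_div _ _ hb'.ne' hd'.ne', ← map_mul, ← map_mul, ← map_mul, ← map_add,
          hnudiv _ _ (by rw [map_mul]; exact mul_ne_zero hb hd), hmul b d, ← hmul, ← hmul]
        gcongr
        · exact hnonneg _
        · rw [← hmul b c]; exact hadd _ _ }
  refine ⟨F, v.toNormedField, g, hnu, hsurj, ?_⟩
  intro K _ k hk
  let kb : R →+* K := Ideal.Quotient.lift P k (fun a ha => by
    rw [← norm_eq_zero, hk]; exact ha)
  have hkb : Function.Injective kb := by
    rw [injective_iff_map_eq_zero]
    intro x hx
    obtain ⟨a, rfl⟩ := Ideal.Quotient.mk_surjective x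
    rw [Ideal.Quotient.lift_mk, ← norm_eq_zero, hk] at hx
    exact Ideal.Quotient.eq_zero_iff_mem.2 hx
  refine ⟨IsFractionRing.lift (A := R) (K := F) hkb, fun r => ?_⟩
  exact IsFractionRing.lift_algebraMap hkb _

/-- Every multiplicative seminorm on a commutative unital ring arises from a unital ring
homomorphism into a complete normed field generated (as a complete valuation field) by the
image, uniquely up to isometric isomorphism. -/
theorem exists_unique_completion_field_of_multiplicative_seminorm
    {T : Type} [CommRing T] (lam : T → ℝ)
    (hnonneg : ∀ x : T, 0 ≤ lam x)
    (h0 : lam 0 = 0) (h1 : lam 1 = 1)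
    (hadd : ∀ x y : T, lam (x + y) ≤ lam x + lam y)
    (hmul : ∀ x y : T, lam (x * y) = lam x * lam y) :
    ∃ pt : CompleteNormedFieldOver T, pt.Realizes lam ∧
      ∀ pt' : CompleteNormedFieldOver T, pt'.Realizes lam → pt.IsoOver pt' := by
  obtain ⟨F, instF, g, hg, hsurj, huniv⟩ :=
    exists_normed_fraction_field lam hnonneg h0 h1 hadd hmul
  let c : F →+* UniformSpace.Completion F := UniformSpace.Completion.coeRingHom
  refine ⟨{ carrier := UniformSpace.Completion F, hom := c.comp g }, ⟨?_, ?_⟩, ?_⟩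
  · intro r
    exact (UniformSpace.Completion.norm_coe (g r)).trans (hg r)
  · refine Dense.closure_eq ?_
    refine Dense.mono ?_ (UniformSpace.Completion.denseRange_coe (α := F))
    rintro _ ⟨x, rfl⟩
    obtain ⟨a, b, -, rfl⟩ := hsurj x
    change c (g a / g b) ∈ Subfield.closure (Set.range (c.comp g))
    rw [map_div₀]
    exact div_mem (Subfield.subset_closure ⟨a, rfl⟩) (Subfield.subset_closure ⟨b, rfl⟩)
  · intro pt' hpt'
    obtain ⟨hn, hd⟩ := hpt'
    obtain ⟨h, hh⟩ := huniv pt'.carrier pt'.hom hn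
    have hnorm : ∀ x, ‖h x‖ = ‖x‖ := fun x => by
      obtain ⟨a, b, -, rfl⟩ := hsurj x
      rw [map_div₀, norm_div, norm_div, hh, hh, hn, hn, hg, hg]
    have hiso : Isometry h := AddMonoidHomClass.isometry_of_norm h hnorm
    let th : UniformSpace.Completion F →+* pt'.carrier :=
      UniformSpace.Completion.extensionHom h hiso.continuous
    have hth : Isometry th := hiso.completion_extension
    have hthc : ∀ x : F, th (c x) = h x :=
      UniformSpace.Completion.extensionHom_coe h hiso.continuous
    have hsub : Subfield.closure (Set.range pt'.hom) ≤ th.fieldRange := by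
      rw [Subfield.closure_le]
      rintro _ ⟨r, rfl⟩
      exact ⟨c (g r), (hthc _).trans (hh r)⟩
    have hthsurj : Function.Surjective th := by
      intro y
      have hcl : IsClosed (Set.range th) := hth.isClosedEmbedding.isClosed_range
      have hy : y ∈ closure ((Subfield.closure (Set.range pt'.hom) :
          Subfield pt'.carrier) : Set pt'.carrier) := by
        rw [hd]; trivial
      exact closure_minimal (fun z hz => hsub hz) hcl hy
    refine ⟨RingEquiv.ofBijective th ⟨hth.injective, hthsurj⟩, ?_, ?_⟩
    · intro x
      exact hth.norm_map_of_map_zero (map_zero th) x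
    · intro r
      exact (hthc _).trans (hh r)
end

section
/- Let T be a nonzero commutative unital Banach ring, that is, a commutative ring complete with respect to a submultiplicative norm satisfying ‖1‖ = 1. Then the Berkovich spectrum ℳ(T) = {λ : T → ℝ | λ is a multiplicative seminorm on T with λ(x) ≤ ‖x‖ for all x ∈ T}, regarded as a subspace of the product space T → ℝ (topology of pointwise convergence), is nonempty and compact. -/
/-- A multiplicative seminorm on a commutative unital ring. -/
def IsMultSeminorm {T : Type*} [CommRing T] (lam : T → ℝ) : Prop :=
  (∀ x : T, 0 ≤ lam x) ∧ lam 0 = 0 ∧ lam 1 = 1 ∧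
    (∀ x y : T, lam (x + y) ≤ lam x + lam y) ∧
    (∀ x y : T, lam (x * y) = lam x * lam y)

/-- The Berkovich spectrum of a commutative unital Banach ring: the set of multiplicative
seminorms bounded by the norm, inside the product space `T → ℝ`. -/
def BerkSpec (T : Type*) [NormedCommRing T] : Set (T → ℝ) :=
  {lam | IsMultSeminorm lam ∧ ∀ x : T, lam x ≤ ‖x‖}

/-- Submultiplicative seminorms bounded by the norm, normalised at one. -/
def SubSN (T : Type*) [NormedCommRing T] : Set (T → ℝ) :=
  {f | (∀ x, 0 ≤ f x) ∧ f 0 = 0 ∧ f 1 = 1 ∧ (∀ x y, f (x + y) ≤ f x + f y) ∧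
    (∀ x y, f (x * y) ≤ f x * f y) ∧ (∀ x, f (-x) = f x) ∧ ∀ x, f x ≤ ‖x‖}

theorem isCompact_of_bdd {T : Type*} [NormedCommRing T] {S : Set (T → ℝ)} (hS : IsClosed S)
    (h : ∀ f ∈ S, ∀ x, 0 ≤ f x ∧ f x ≤ ‖x‖) : IsCompact S := by
  have hK : IsCompact (Set.pi Set.univ fun x : T => Set.Icc (0 : ℝ) ‖x‖) :=
    isCompact_univ_pi fun x => isCompact_Icc
  refine hK.of_isClosed_subset hS ?_
  intro f hf x _
  exact h f hf x

theorem isClosed_subSN (T : Type*) [NormedCommRing T] : IsClosed (SubSN T) := by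
  simp only [SubSN, Set.ofPred_and, Set.ofPred_forall]
  refine IsClosed.inter (isClosed_iInter fun x => isClosed_le (by fun_prop) (by fun_prop)) <|
    IsClosed.inter (isClosed_eq (by fun_prop) (by fun_prop)) <|
    IsClosed.inter (isClosed_eq (by fun_prop) (by fun_prop)) <|
    IsClosed.inter (isClosed_iInter fun x => isClosed_iInter fun y =>
      isClosed_le (by fun_prop) (by fun_prop)) <|
    IsClosed.inter (isClosed_iInter fun x => isClosed_iInter fun y =>
      isClosed_le (by fun_prop) (by fun_prop)) <|
    IsClosed.inter (isClosed_iInter fun x => isClosed_eq (by fun_prop) (by fun_prop)) <|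
    (isClosed_iInter fun x => isClosed_le (by fun_prop) (by fun_prop))

theorem isClosed_berkSpec (T : Type*) [NormedCommRing T] : IsClosed (BerkSpec T) := by
  simp only [BerkSpec, IsMultSeminorm, Set.ofPred_and, Set.ofPred_forall]
  refine IsClosed.inter (IsClosed.inter
      (isClosed_iInter fun x => isClosed_le (by fun_prop) (by fun_prop)) <|
    IsClosed.inter (isClosed_eq (by fun_prop) (by fun_prop)) <|
    IsClosed.inter (isClosed_eq (by fun_prop) (by fun_prop)) <|
    IsClosed.inter (isClosed_iInter fun x => isClosed_iInter fun y =>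
      isClosed_le (by fun_prop) (by fun_prop)) <|
    (isClosed_iInter fun x => isClosed_iInter fun y =>
      isClosed_eq (by fun_prop) (by fun_prop))) <|
    (isClosed_iInter fun x => isClosed_le (by fun_prop) (by fun_prop))

theorem exists_minimal_subSN (T : Type*) [NormedCommRing T] [NormOneClass T] :
    ∃ p, Minimal (· ∈ SubSN T) p := by
  have h0 : (fun x : T => ‖x‖) ∈ SubSN T :=
    ⟨fun x => norm_nonneg x, norm_zero, norm_one, norm_add_le, norm_mul_le, norm_neg,
      fun x => le_rfl⟩
  have H : ∀ c ⊆ SubSN T, IsChain (· ≤ ·) c → ∀ y ∈ c, ∃ lb ∈ SubSN T, ∀ z ∈ c, lb ≤ z := by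
    intro c hcS hc y hy
    have : Nonempty c := ⟨⟨y, hy⟩⟩
    have hcl : ∀ f : T → ℝ, IsClosed (SubSN T ∩ Set.Iic f) := fun f =>
      (isClosed_subSN T).inter isClosed_Iic
    have := IsCompact.nonempty_iInter_of_directed_nonempty_isCompact_isClosed
      (fun f : c => SubSN T ∩ Set.Iic f.1) ?_ (fun f => ⟨f.1, hcS f.2, Set.mem_Iic.2 le_rfl⟩)
      (fun f => isCompact_of_bdd (hcl _) fun g hg x => ⟨hg.1.1 x, hg.1.2.2.2.2.2.2 x⟩)
      (fun f => hcl _)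
    · obtain ⟨g, hg⟩ := this
      rw [Set.mem_iInter] at hg
      exact ⟨g, (hg ⟨y, hy⟩).1, fun z hz => (hg ⟨z, hz⟩).2⟩
    · rintro ⟨f, hf⟩ ⟨g, hg⟩
      rcases hc.total hf hg with h | h
      · exact ⟨⟨f, hf⟩, subset_rfl, fun k hk => ⟨hk.1, le_trans hk.2 h⟩⟩
      · exact ⟨⟨g, hg⟩, fun k hk => ⟨hk.1, le_trans hk.2 h⟩, subset_rfl⟩
  obtain ⟨m, -, hm⟩ := @zorn_le_nonempty₀ (T → ℝ)ᵒᵈ _ (SubSN T)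
    (fun c cS hc y yc => H c cS hc.symm y yc) _ h0
  exact ⟨m, hm⟩

/-- Exponential growth rates of the powers of `x`. -/
def RateSet {T : Type*} [CommRing T] (f : T → ℝ) (x : T) : Set ℝ :=
  {a | 0 < a ∧ ∃ C, 0 < C ∧ ∀ n : ℕ, f (x ^ n) ≤ C * a ^ n}

theorem RateSet.bddBelow {T : Type*} [CommRing T] (f : T → ℝ) (x : T) :
    BddBelow (RateSet f x) := ⟨0, fun _ ha => ha.1.le⟩

theorem SubSN.pow_le {T : Type*} [NormedCommRing T] {f : T → ℝ} (hf : f ∈ SubSN T) (x : T)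
    (n : ℕ) : f (x ^ n) ≤ f x ^ n := by
  obtain ⟨h0, hz, h1, ha, hm, hn, hb⟩ := hf
  induction n with
  | zero => simp [h1]
  | succ n ih =>
    rw [pow_succ, pow_succ]
    exact (hm _ _).trans (mul_le_mul_of_nonneg_right ih (h0 x))

theorem RateSet.mem_of_lt_self {T : Type*} [NormedCommRing T] {f : T → ℝ} (hf : f ∈ SubSN T)
    {x : T} {a : ℝ} (h : f x < a) : a ∈ RateSet f x := by
  refine ⟨(hf.1 x).trans_lt h, 1, one_pos, fun n => ?_⟩
  rw [one_mul]
  exact (SubSN.pow_le hf x n).trans (pow_le_pow_left₀ (hf.1 x) h.le n)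

theorem RateSet.nonempty {T : Type*} [NormedCommRing T] {f : T → ℝ} (hf : f ∈ SubSN T)
    (x : T) : (RateSet f x).Nonempty := ⟨f x + 1, RateSet.mem_of_lt_self hf (lt_add_one _)⟩

theorem RateSet.mem_of_lt {T : Type*} [NormedCommRing T] {f : T → ℝ} (hf : f ∈ SubSN T)
    {x : T} {b : ℝ} (h : sInf (RateSet f x) < b) : b ∈ RateSet f x := by
  obtain ⟨a, ⟨ha, C, hC, H⟩, hab⟩ := exists_lt_of_csInf_lt (RateSet.nonempty hf x) h
  refine ⟨ha.trans hab, C, hC, fun n => (H n).trans ?_⟩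
  gcongr

theorem SubSN.sum_le {T : Type*} [NormedCommRing T] {f : T → ℝ} (hf : f ∈ SubSN T)
    {ι : Type*} (s : Finset ι) (g : ι → T) : f (∑ i ∈ s, g i) ≤ ∑ i ∈ s, f (g i) :=
  Finset.le_sum_of_subadditive f hf.2.1.le hf.2.2.2.1 s g

theorem SubSN.mul_natCast_le {T : Type*} [NormedCommRing T] {f : T → ℝ} (hf : f ∈ SubSN T)
    (x : T) (n : ℕ) : f (x * n) ≤ f x * n := by
  have := SubSN.sum_le hf (Finset.range n) (fun _ => x)
  simp only [Finset.sum_const, Finset.card_range, nsmul_eq_mul] at this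
  rwa [mul_comm x, mul_comm (f x)]

theorem RateSet.add_mem {T : Type*} [NormedCommRing T] {f : T → ℝ} (hf : f ∈ SubSN T)
    {x y : T} {a b : ℝ} (ha : a ∈ RateSet f x) (hb : b ∈ RateSet f y) :
    a + b ∈ RateSet f (x + y) := by
  obtain ⟨ha, C, hC, H⟩ := ha
  obtain ⟨hb, D, hD, K⟩ := hb
  refine ⟨by positivity, C * D, by positivity, fun n => ?_⟩
  rw [add_pow, add_pow, Finset.mul_sum]
  refine (SubSN.sum_le hf _ _).trans (Finset.sum_le_sum fun k _ => ?_)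
  refine (SubSN.mul_natCast_le hf _ _).trans ?_
  have h1 : f (x ^ k * y ^ (n - k)) ≤ (C * a ^ k) * (D * b ^ (n - k)) :=
    (hf.2.2.2.2.1 _ _).trans (mul_le_mul (H _) (K _) (hf.1 _) (by positivity))
  calc f (x ^ k * y ^ (n - k)) * (n.choose k : ℝ)
      ≤ (C * a ^ k) * (D * b ^ (n - k)) * (n.choose k : ℝ) := by gcongr
    _ = _ := by ring

theorem RateSet.mul_mem {T : Type*} [NormedCommRing T] {f : T → ℝ} (hf : f ∈ SubSN T)
    {x y : T} {a b : ℝ} (ha : a ∈ RateSet f x) (hb : b ∈ RateSet f y) :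
    a * b ∈ RateSet f (x * y) := by
  obtain ⟨ha, C, hC, H⟩ := ha
  obtain ⟨hb, D, hD, K⟩ := hb
  refine ⟨by positivity, C * D, by positivity, fun n => ?_⟩
  rw [mul_pow, mul_pow]
  calc f (x ^ n * y ^ n) ≤ (C * a ^ n) * (D * b ^ n) :=
        (hf.2.2.2.2.1 _ _).trans (mul_le_mul (H _) (K _) (hf.1 _) (by positivity))
    _ = _ := by ring

theorem RateSet.neg_mem {T : Type*} [NormedCommRing T] {f : T → ℝ} (hf : f ∈ SubSN T)
    {x : T} {a : ℝ} (ha : a ∈ RateSet f x) : a ∈ RateSet f (-x) := by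
  obtain ⟨ha, C, hC, H⟩ := ha
  refine ⟨ha, C, hC, fun n => ?_⟩
  rcases n.even_or_odd with h | h
  · rw [h.neg_pow]; exact H n
  · rw [h.neg_pow, hf.2.2.2.2.2.1]; exact H n

theorem rad_le_self {T : Type*} [NormedCommRing T] {f : T → ℝ} (hf : f ∈ SubSN T) (x : T) :
    sInf (RateSet f x) ≤ f x :=
  le_of_forall_gt_imp_ge_of_dense fun _ h =>
    csInf_le (RateSet.bddBelow f x) (RateSet.mem_of_lt_self hf h)

theorem rad_mem {T : Type*} [NormedCommRing T] {f : T → ℝ} (hf : f ∈ SubSN T) :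
    (fun x => sInf (RateSet f x)) ∈ SubSN T := by
  have hnn : ∀ x, 0 ≤ sInf (RateSet f x) := fun x => Real.sInf_nonneg fun a ha => ha.1.le
  refine ⟨hnn, ?_, ?_, ?_, ?_, ?_, ?_⟩
  · exact le_antisymm ((rad_le_self hf 0).trans_eq hf.2.1) (hnn 0)
  · refine le_antisymm ((rad_le_self hf 1).trans_eq hf.2.2.1) ?_
    refine le_csInf (RateSet.nonempty hf 1) ?_
    rintro a ⟨ha, C, hC, H⟩
    by_contra! hlt
    obtain ⟨n, hn⟩ := exists_pow_lt_of_lt_one (inv_pos.2 hC) hlt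
    have := H n
    rw [one_pow, hf.2.2.1] at this
    have h2 : C * a ^ n < C * C⁻¹ := by gcongr
    rw [mul_inv_cancel₀ hC.ne'] at h2
    linarith
  · intro x y
    refine le_of_forall_pos_le_add fun ε hε => ?_
    have h1 := RateSet.mem_of_lt hf (x := x) (lt_add_of_pos_right _ (half_pos hε))
    have h2 := RateSet.mem_of_lt hf (x := y) (lt_add_of_pos_right _ (half_pos hε))
    have := csInf_le (RateSet.bddBelow f _) (RateSet.add_mem hf h1 h2)
    linarith
  · intro x y
    refine le_mul_of_forall_lt₀ fun a ha b hb => ?_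
    exact csInf_le (RateSet.bddBelow f _)
      (RateSet.mul_mem hf (RateSet.mem_of_lt hf ha) (RateSet.mem_of_lt hf hb))
  · intro x
    have : RateSet f (-x) = RateSet f x :=
      Set.Subset.antisymm (fun a ha => by simpa using RateSet.neg_mem hf ha)
        (fun a ha => RateSet.neg_mem hf ha)
    simp only [this]
  · exact fun x => (rad_le_self hf x).trans (hf.2.2.2.2.2.2 x)

theorem RateSet.root_mem {T : Type*} [NormedCommRing T] {f : T → ℝ} (hf : f ∈ SubSN T)
    {x : T} {k : ℕ} (hk : 1 ≤ k) {s : ℝ} (hs : 0 < s) (h : s ^ k ∈ RateSet f (x ^ k)) :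
    s ∈ RateSet f x := by
  obtain ⟨-, C, hC, H⟩ := h
  have hx := hf.1 x
  refine ⟨hs, C * (1 + ∑ r ∈ Finset.range k, (f x / s) ^ r), by positivity, fun m => ?_⟩
  have hr : m % k < k := Nat.mod_lt _ hk
  have hm : k * (m / k) + m % k = m := Nat.div_add_mod m k
  have e1 : f (x ^ m) ≤ (C * (s ^ k) ^ (m / k)) * f x ^ (m % k) := by
    conv_lhs => rw [← hm, pow_add, pow_mul]
    exact (hf.2.2.2.2.1 _ _).trans
      (mul_le_mul (H _) (SubSN.pow_le hf _ _) (hf.1 _) (by positivity))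
  have e2 : (f x / s) ^ (m % k) ≤ 1 + ∑ r ∈ Finset.range k, (f x / s) ^ r := by
    have := Finset.single_le_sum (f := fun r => (f x / s) ^ r) (s := Finset.range k)
      (fun i _ => by positivity) (Finset.mem_range.2 hr)
    linarith
  have e3 : (C * (s ^ k) ^ (m / k)) * f x ^ (m % k) = C * (f x / s) ^ (m % k) * s ^ m := by
    conv_rhs => rw [← hm, pow_add s, pow_mul s]
    rw [hm, div_pow]
    field_simp
  rw [e3] at e1
  refine e1.trans ?_
  gcongr

theorem minimal_isPowMul {T : Type*} [NormedCommRing T] {p : T → ℝ}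
    (hp : Minimal (· ∈ SubSN T) p) : IsPowMul p := by
  have hf := hp.1
  have key : ∀ x, p x ≤ sInf (RateSet p x) := hp.2 (rad_mem hf) (fun x => rad_le_self hf x)
  intro x k hk
  refine le_antisymm (SubSN.pow_le hf x k) ?_
  refine le_of_forall_gt_imp_ge_of_dense fun a ha => ?_
  have ha0 : 0 < a := (hf.1 _).trans_lt ha
  have hs : 0 < a ^ ((k : ℝ)⁻¹) := Real.rpow_pos_of_pos ha0 _
  have hsk : (a ^ ((k : ℝ)⁻¹)) ^ k = a := Real.rpow_inv_natCast_pow ha0.le (by omega)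
  have h1 : a ^ ((k : ℝ)⁻¹) ∈ RateSet p x := by
    refine RateSet.root_mem hf hk hs ?_
    rw [hsk]
    exact RateSet.mem_of_lt_self hf ha
  have h2 := (key x).trans (csInf_le (RateSet.bddBelow p x) h1)
  calc p x ^ k ≤ (a ^ ((k : ℝ)⁻¹)) ^ k := pow_le_pow_left₀ (hf.1 x) h2 k
    _ = a := hsk

theorem minimal_mul {T : Type*} [NormedCommRing T] {p : T → ℝ}
    (hp : Minimal (· ∈ SubSN T) p) (c x : T) : p (c * x) = p c * p x := by
  have hpm := minimal_isPowMul hp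
  obtain ⟨h0, hz, h1, ha, hm, hn, hb⟩ := hp.1
  by_cases hc : p c = 0
  · refine le_antisymm (hm c x) ?_
    rw [hc, zero_mul]
    exact h0 _
  let f : RingSeminorm T :=
    { toFun := p, map_zero' := hz, add_le' := ha, neg' := hn, mul_le' := hm }
  have hf1 : f 1 ≤ 1 := h1.le
  have hfc : f c ≠ 0 := hc
  have hfp : IsPowMul f := hpm
  have hle : ∀ x, seminormFromConst hf1 hfc hfp x ≤ p x :=
    seminormFromConst_le_seminorm hf1 hfc hfp
  have hmem : (fun x => seminormFromConst hf1 hfc hfp x) ∈ SubSN T :=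
    ⟨fun x => apply_nonneg _ x, map_zero _, seminormFromConst_one hf1 hfc hfp,
      fun x y => map_add_le_add _ x y, fun x y => map_mul_le_mul _ x y,
      fun x => map_neg_eq_map _ x, fun x => (hle x).trans (hb x)⟩
  have heq : ∀ x, seminormFromConst' c f x = p x := fun x =>
    le_antisymm (hle x) (hp.2 hmem hle x)
  have := seminormFromConst_const_mul hf1 hfc hfp x
  simpa only [heq] using this

/-- The Berkovich spectrum of a nonzero commutative unital Banach ring is a nonempty
compact subset of `T → ℝ` with the topology of pointwise convergence. -/
theorem berkSpec_nonempty_and_isCompact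
    (T : Type*) [NormedCommRing T] [NormOneClass T] [CompleteSpace T] [Nontrivial T] :
    (BerkSpec T).Nonempty ∧ IsCompact (BerkSpec T) := by
  refine ⟨?_, isCompact_of_bdd (isClosed_berkSpec T) fun f hf x => ⟨hf.1.1 x, hf.2 x⟩⟩
  obtain ⟨p, hp⟩ := exists_minimal_subSN T
  have h := hp.1
  exact ⟨p, ⟨h.1, h.2.1, h.2.2.1, h.2.2.2.1, minimal_mul hp⟩, h.2.2.2.2.2.2⟩
end
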